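/- Let n ≥ 3 be an integer and let 𝒯 be a triangle family with |𝒯| = C(n,3) and λ(𝒯) > n − 1. Then λ(𝒯) = n, the support graph Γ₀(𝒯) is a complete graph on exactly n vertices, and 𝒯 consists of all 3-element subsets of the vertex set of Γ₀(𝒯). -/

import Mathlib

open Finset Matrix

/-- The sign `[T : e]` of an edge `e` in a triangle `T`. -/
noncomputable def triSign (T e : Finset ℕ) : ℝ :=
  if e ⊆ T ∧ e.card = 2 ∧ T.card = 3 then
    if (T \ e).max = T.max ∨ (T \ e).min = T.min then 1 else -1
  else 0

/-- A triangle family: a nonempty finite set of 3-element subsets of ℕ. -/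
def IsTriFam (F : Finset (Finset ℕ)) : Prop :=
  F.Nonempty ∧ ∀ T ∈ F, T.card = 3

/-- The edges of the support graph of a triangle family. -/
def edgesOf (F : Finset (Finset ℕ)) : Finset (Finset ℕ) :=
  F.biUnion fun T => T.powersetCard 2

/-- The vertices of the support graph of a triangle family. -/
def vertsOf (F : Finset (Finset ℕ)) : Finset ℕ :=
  F.biUnion id

/-- The signed edge-triangle incidence matrix of a triangle family. -/
noncomputable def delta1 (F : Finset (Finset ℕ)) :
    Matrix {T // T ∈ F} {e // e ∈ edgesOf F} ℝ :=
  Matrix.of fun T e => triSign T.1 e.1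

/-- The smallest positive eigenvalue of a matrix. -/
noncomputable def lambdaMinPos {m : Type*} [Fintype m] (M : Matrix m m ℝ) : ℝ :=
  sInf {μ : ℝ | 0 < μ ∧ ∃ v : m → ℝ, v ≠ 0 ∧ M.mulVec v = μ • v}

/-- `λ(𝒯)`: the smallest positive eigenvalue of `δ₁(𝒯)ᵀ δ₁(𝒯)`. -/
noncomputable def lam (F : Finset (Finset ℕ)) : ℝ :=
  lambdaMinPos ((delta1 F)ᵀ * delta1 F)

/-- The neighborhood of `x` in the support graph `Γ₀(F)`. -/
def nbrs (F : Finset (Finset ℕ)) (x : ℕ) : Finset ℕ :=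
  (vertsOf F).filter fun y => x ≠ y ∧ ∃ T ∈ F, x ∈ T ∧ y ∈ T

/-- `φ(t)`: the maximum of `λ(𝒯)` over triangle families with `|𝒯| = t`. -/
noncomputable def phi (t : ℕ) : ℝ :=
  sSup {r : ℝ | ∃ F : Finset (Finset ℕ), IsTriFam F ∧ F.card = t ∧ lam F = r}

/-- `Λ(t) = max_{1 ≤ s ≤ t} φ(s)`. -/
noncomputable def Lam (t : ℕ) : ℝ :=
  sSup {r : ℝ | ∃ s : ℕ, 1 ≤ s ∧ s ≤ t ∧ phi s = r}

/-- `H(n) = min{ s ≥ 1 : φ(C(n,3)+s) > n - 1 }`. -/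
noncomputable def Hfun (n : ℕ) : ℕ :=
  sInf {s : ℕ | 1 ≤ s ∧ (n : ℝ) - 1 < phi (n.choose 3 + s)}

/-- The triangle family `𝒯_{c,b}`: all 3-cliques of `K_c ∨ (b isolated vertices)`. -/
def Tcb (c b : ℕ) : Finset (Finset ℕ) :=
  ((Finset.Icc 1 c).powersetCard 3) ∪
    (Finset.Icc (c+1) (c+b)).biUnion
      (fun i => ((Finset.Icc 1 c).powersetCard 2).image (fun p => insert i p))


lemma lamMin_diag {m : Type*} [Fintype m] [DecidableEq m] (M : Matrix m m ℝ)
    (hM : M.PosSemidef) (i : m) : lambdaMinPos M * M i i ≤ (M * M) i i := by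
  have hH := hM.1
  have hev : ∀ k, lambdaMinPos M * hH.eigenvalues k ≤ hH.eigenvalues k * hH.eigenvalues k := by
    intro k
    rcases (hM.eigenvalues_nonneg k).eq_or_lt with h | h
    · rw [← h]; simp
    · refine mul_le_mul_of_nonneg_right ?_ h.le
      apply csInf_le ⟨0, fun x hx => hx.1.le⟩
      refine ⟨h, hH.eigenvectorBasis k, ?_, hH.mulVec_eigenvectorBasis k⟩
      intro h0
      have := hH.eigenvectorBasis.orthonormal.ne_zero k
      apply this
      ext j
      exact congrFun h0 j
  have hs := hH.spectral_theorem
  set U : Matrix m m ℝ := (hH.eigenvectorUnitary : Matrix m m ℝ) with hU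
  have hUU : star U * U = 1 := Unitary.coe_star_mul_self hH.eigenvectorUnitary
  set D : Matrix m m ℝ := diagonal hH.eigenvalues with hD
  have h1 : M = U * D * star U := by
    conv_lhs => rw [hs]
    rfl
  have h2 : M * M = U * (D * D) * star U := by
    calc M * M = (U * D * star U) * (U * D * star U) := by rw [← h1]
      _ = U * D * (star U * U) * D * star U := by simp only [Matrix.mul_assoc]
      _ = _ := by rw [hUU]; simp only [Matrix.mul_assoc, Matrix.one_mul]
  have key : ∀ w : m → ℝ, (U * diagonal w * star U) i i = ∑ k, w k * (U i k)^2 := by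
    intro w
    rw [Matrix.mul_apply]
    refine Finset.sum_congr rfl fun k _ => ?_
    rw [Matrix.mul_diagonal]
    simp [Matrix.star_apply]
    ring
  have e1 : M i i = ∑ k, hH.eigenvalues k * (U i k)^2 := by
    rw [← key, ← hD, ← h1]
  have e2 : (M * M) i i = ∑ k, (hH.eigenvalues k * hH.eigenvalues k) * (U i k)^2 := by
    rw [← key, h2, hD, Matrix.diagonal_mul_diagonal]
  rw [e1, e2, Finset.mul_sum]
  refine Finset.sum_le_sum fun k _ => ?_
  rw [← mul_assoc]
  exact mul_le_mul_of_nonneg_right (hev k) (sq_nonneg _)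

lemma triSign_sq (T e : Finset ℕ) :
    triSign T e * triSign T e = if e ⊆ T ∧ e.card = 2 ∧ T.card = 3 then 1 else 0 := by
  unfold triSign
  split_ifs <;> norm_num

lemma mem_edgesOf {F : Finset (Finset ℕ)} {e : Finset ℕ} :
    e ∈ edgesOf F ↔ ∃ T ∈ F, e ⊆ T ∧ e.card = 2 := by
  simp [edgesOf, Finset.mem_powersetCard]

lemma mem_vertsOf {F : Finset (Finset ℕ)} {x : ℕ} :
    x ∈ vertsOf F ↔ ∃ T ∈ F, x ∈ T := by
  simp [vertsOf]

lemma gram_apply (F : Finset (Finset ℕ)) (e f : {e // e ∈ edgesOf F}) :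
    ((delta1 F)ᵀ * delta1 F) e f = ∑ T ∈ F, triSign T e.1 * triSign T f.1 := by
  rw [Matrix.mul_apply]
  simp only [Matrix.transpose_apply, delta1, Matrix.of_apply]
  exact Finset.sum_coe_sort F (fun T => triSign T e.1 * triSign T f.1)

lemma gram_diag (F : Finset (Finset ℕ)) (hF : IsTriFam F) (e : {e // e ∈ edgesOf F}) :
    ((delta1 F)ᵀ * delta1 F) e e = ((F.filter (e.1 ⊆ ·)).card : ℝ) := by
  rw [gram_apply]
  obtain ⟨T, hT, heT, he⟩ := mem_edgesOf.1 e.2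
  rw [Finset.card_filter]
  push_cast
  refine Finset.sum_congr rfl fun T hT => ?_
  rw [triSign_sq]
  simp [he, hF.2 T hT]

lemma gram_off (F : Finset (Finset ℕ)) (hF : IsTriFam F) (e f : {e // e ∈ edgesOf F})
    (hne : e ≠ f) :
    ((delta1 F)ᵀ * delta1 F) e f ^ 2 ≤ ∑ T ∈ F, if e.1 ⊆ T ∧ f.1 ⊆ T then (1:ℝ) else 0 := by
  rw [gram_apply]
  obtain ⟨-, -, -, he⟩ := mem_edgesOf.1 e.2
  obtain ⟨-, -, -, hf⟩ := mem_edgesOf.1 f.2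
  have hu : 3 ≤ (e.1 ∪ f.1).card := by
    by_contra h
    have h1 : e.1 = e.1 ∪ f.1 := Finset.eq_of_subset_of_card_le Finset.subset_union_left (by omega)
    have h2 : f.1 = e.1 ∪ f.1 := Finset.eq_of_subset_of_card_le Finset.subset_union_right (by omega)
    exact hne (Subtype.ext (h1.trans h2.symm))
  have huniq : ∀ T ∈ F, e.1 ⊆ T → f.1 ⊆ T → T = e.1 ∪ f.1 := fun T hT h1 h2 =>
    (Finset.eq_of_subset_of_card_le (Finset.union_subset h1 h2) (by rw [hF.2 T hT]; exact hu)).symm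
  have hz : ∀ T ∈ F, T ≠ e.1 ∪ f.1 → triSign T e.1 * triSign T f.1 = 0 := by
    intro T hT hTn
    by_cases h1 : e.1 ⊆ T
    · by_cases h2 : f.1 ⊆ T
      · exact absurd (huniq T hT h1 h2) hTn
      · simp [triSign, h2]
    · simp [triSign, h1]
  by_cases hmem : e.1 ∪ f.1 ∈ F
  · rw [Finset.sum_eq_single_of_mem _ hmem hz]
    refine le_trans ?_ (Finset.single_le_sum (f := fun T => if e.1 ⊆ T ∧ f.1 ⊆ T then (1:ℝ) else 0)
      (fun T _ => by positivity) hmem)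
    have : (triSign (e.1 ∪ f.1) e.1 * triSign (e.1 ∪ f.1) f.1)^2 =
      (triSign (e.1 ∪ f.1) e.1 * triSign (e.1 ∪ f.1) e.1) *
      (triSign (e.1 ∪ f.1) f.1 * triSign (e.1 ∪ f.1) f.1) := by ring
    rw [this, triSign_sq, triSign_sq]
    simp [he, hf, hF.2 _ hmem]
  · rw [Finset.sum_eq_zero fun T hT => hz T hT (fun h => hmem (h ▸ hT))]
    norm_num

lemma edges_in (F : Finset (Finset ℕ)) (hF : IsTriFam F) (T : Finset ℕ) (hT : T ∈ F) :
    ((edgesOf F).filter (· ⊆ T)).card = 3 := by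
  have : (edgesOf F).filter (· ⊆ T) = T.powersetCard 2 := by
    ext e
    simp only [Finset.mem_filter, mem_edgesOf, Finset.mem_powersetCard]
    constructor
    · rintro ⟨⟨_, _, _, h⟩, h2⟩; exact ⟨h2, h⟩
    · rintro ⟨h2, h⟩; exact ⟨⟨T, hT, h2, h⟩, h2⟩
  rw [this, Finset.card_powersetCard, hF.2 T hT]; rfl

lemma deg_bound (F : Finset (Finset ℕ)) (hF : IsTriFam F) (e : Finset ℕ) (he : e ∈ edgesOf F) :
    lam F ≤ ((F.filter (e ⊆ ·)).card : ℝ) + 2 := by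
  set e' : {e // e ∈ edgesOf F} := ⟨e, he⟩ with he'
  set d : ℝ := ((F.filter (e ⊆ ·)).card : ℝ) with hd
  set M := (delta1 F)ᵀ * delta1 F with hMdef
  have hM : M.PosSemidef := by
    have := Matrix.posSemidef_conjTranspose_mul_self (delta1 F)
    rwa [Matrix.conjTranspose_eq_transpose_of_trivial] at this
  have h := lamMin_diag M hM e'
  have hdiag : M e' e' = d := gram_diag F hF e'
  have hsq : (M * M) e' e' = ∑ f, M e' f ^ 2 := by
    rw [Matrix.mul_apply]
    refine Finset.sum_congr rfl fun f _ => ?_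
    have : M f e' = M e' f := by
      have := hM.1.apply f e'
      simpa using this.symm
    rw [this, sq]
  have hb : ∑ f, M e' f ^ 2 ≤ d ^ 2 + 2 * d := by
    rw [← Finset.add_sum_erase _ _ (Finset.mem_univ e'), hdiag]
    gcongr
    have h1 : ∑ f ∈ Finset.univ.erase e', M e' f ^ 2 ≤
        ∑ f ∈ Finset.univ.erase e', ∑ T ∈ F, if e ⊆ T ∧ f.1 ⊆ T then (1:ℝ) else 0 :=
      Finset.sum_le_sum fun f hf => gram_off F hF e' f (Finset.ne_of_mem_erase hf).symm
    have h2 : ∑ f : {e // e ∈ edgesOf F}, ∑ T ∈ F, (if e ⊆ T ∧ f.1 ⊆ T then (1:ℝ) else 0) =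
        3 * d := by
      rw [Finset.sum_coe_sort (edgesOf F) (fun f => ∑ T ∈ F, if e ⊆ T ∧ f ⊆ T then (1:ℝ) else 0),
        Finset.sum_comm, hd, Finset.card_filter]
      push_cast
      rw [Finset.mul_sum]
      refine Finset.sum_congr rfl fun T hT => ?_
      by_cases h : e ⊆ T
      · simp [h, edges_in F hF T hT]
      · simp [h]
    have h3 := Finset.add_sum_erase Finset.univ (fun f : {e // e ∈ edgesOf F} =>
      ∑ T ∈ F, (if e ⊆ T ∧ f.1 ⊆ T then (1:ℝ) else 0)) (Finset.mem_univ e')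
    have h4 : ∑ T ∈ F, (if e ⊆ T ∧ e'.1 ⊆ T then (1:ℝ) else 0) = d := by
      simp [he', hd]
    rw [h2] at h3
    simp only [h4] at h3
    linarith
  have hpos : 0 < d := by
    obtain ⟨T, hT, heT, -⟩ := mem_edgesOf.1 he
    rw [hd]
    exact_mod_cast Finset.card_pos.2 ⟨T, Finset.mem_filter.2 ⟨hT, heT⟩⟩
  have : lam F * d ≤ (d + 2) * d := by
    have : lam F * d ≤ (M * M) e' e' := by rw [← hdiag]; exact h
    rw [hsq] at this
    nlinarith
  exact le_of_mul_le_mul_right this hpos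

lemma vert_bound (F : Finset (Finset ℕ)) (hF : IsTriFam F) (k : ℕ)
    (hk : ∀ e ∈ edgesOf F, k ≤ (F.filter (e ⊆ ·)).card) (x : ℕ) (hx : x ∈ vertsOf F) :
    k + 1 ≤ ((edgesOf F).filter (x ∈ ·)).card := by
  obtain ⟨T, hT, hxT⟩ := mem_vertsOf.1 hx
  obtain ⟨y, hy, hyx⟩ := Finset.exists_mem_ne (by rw [hF.2 T hT]; norm_num : 1 < T.card) x
  have hcard2 : ({x, y} : Finset ℕ).card = 2 := Finset.card_pair hyx.symm
  have he : ({x, y} : Finset ℕ) ∈ edgesOf F :=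
    mem_edgesOf.2 ⟨T, hT, by simp [Finset.insert_subset_iff, hxT, hy], hcard2⟩
  have h1 := hk _ he
  have h2 : (F.filter (({x, y} : Finset ℕ) ⊆ ·)).card ≤
      (((edgesOf F).filter (x ∈ ·)).erase {x, y}).card := by
    refine Finset.card_le_card_of_injOn (fun T => T.erase y) ?_ ?_
    · intro T' hT'
      simp only [Finset.coe_filter, Set.mem_ofPred_eq, Finset.insert_subset_iff,
        Finset.singleton_subset_iff] at hT'
      obtain ⟨hT'F, hx', hy'⟩ := hT'
      simp only [Finset.coe_erase, Finset.coe_filter, Set.mem_sdiff, Set.mem_ofPred_eq,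
        Set.mem_singleton_iff]
      refine ⟨⟨mem_edgesOf.2 ⟨T', hT'F, Finset.erase_subset _ _, ?_⟩, ?_⟩, ?_⟩
      · rw [Finset.card_erase_of_mem hy', hF.2 T' hT'F]
      · simp [hx', hyx.symm]
      · intro h
        have : y ∈ T'.erase y := by rw [h]; simp
        simp at this
    · intro A hA B hB hAB
      simp only [Finset.coe_filter, Set.mem_ofPred_eq, Finset.insert_subset_iff,
        Finset.singleton_subset_iff] at hA hB
      rw [← Finset.insert_erase hA.2.2, ← Finset.insert_erase hB.2.2]
      exact congrArg (insert y) hAB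
  rw [Finset.card_erase_of_mem (by simp [he])] at h2
  have : 0 < ((edgesOf F).filter (x ∈ ·)).card := Finset.card_pos.2 ⟨{x, y}, by simp [he]⟩
  omega

lemma edge_count (F : Finset (Finset ℕ)) (hF : IsTriFam F) (k : ℕ)
    (hk : ∀ e ∈ edgesOf F, k ≤ (F.filter (e ⊆ ·)).card) :
    (vertsOf F).card * ((k + 1) * k) ≤ 6 * F.card := by
  have h1 : ∑ e ∈ edgesOf F, (F.filter (e ⊆ ·)).card = ∑ T ∈ F, ((edgesOf F).filter (· ⊆ T)).card :=
    Finset.sum_card_bipartiteAbove_eq_sum_card_bipartiteBelow (fun e T : Finset ℕ => e ⊆ T)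
  have h2 : ∑ x ∈ vertsOf F, ((edgesOf F).filter (x ∈ ·)).card =
      ∑ e ∈ edgesOf F, ((vertsOf F).filter (· ∈ e)).card :=
    Finset.sum_card_bipartiteAbove_eq_sum_card_bipartiteBelow (fun (x : ℕ) (e : Finset ℕ) => x ∈ e)
  rw [Finset.sum_congr rfl (edges_in F hF)] at h1
  have h3 : ∀ e ∈ edgesOf F, ((vertsOf F).filter (· ∈ e)).card = 2 := by
    intro e he
    obtain ⟨T, hT, heT, hc⟩ := mem_edgesOf.1 he
    rw [← hc]
    congr 1
    ext x
    simp only [Finset.mem_filter, mem_vertsOf]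
    exact ⟨fun h => h.2, fun h => ⟨⟨T, hT, heT h⟩, h⟩⟩
  rw [Finset.sum_congr rfl h3] at h2
  have h4 : (vertsOf F).card * (k + 1) ≤ ∑ x ∈ vertsOf F, ((edgesOf F).filter (x ∈ ·)).card := by
    rw [← smul_eq_mul]
    exact Finset.card_nsmul_le_sum _ _ _ (vert_bound F hF k hk)
  have h5 : (edgesOf F).card * k ≤ ∑ e ∈ edgesOf F, (F.filter (e ⊆ ·)).card := by
    rw [← smul_eq_mul]
    exact Finset.card_nsmul_le_sum _ _ _ hk
  simp only [Finset.sum_const, smul_eq_mul] at h1 h2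
  rw [h2] at h4
  rw [h1] at h5
  nlinarith [Nat.mul_le_mul_right k h4]

lemma rigid (n : ℕ) (hn : 3 ≤ n) (F : Finset (Finset ℕ)) (hF : IsTriFam F)
    (hcard : F.card = n.choose 3) (hlam : (n : ℝ) - 1 < lam F) :
    (vertsOf F).card = n ∧ F = (vertsOf F).powersetCard 3 := by
  obtain ⟨k, rfl⟩ : ∃ k, n = k + 2 := ⟨n - 2, by omega⟩
  have hk : ∀ e ∈ edgesOf F, k ≤ (F.filter (e ⊆ ·)).card := by
    intro e he
    have := deg_bound F hF e he
    push_cast at hlam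
    have h : (k : ℝ) < ((F.filter (e ⊆ ·)).card : ℝ) + 1 := by linarith
    have h' : k < (F.filter (e ⊆ ·)).card + 1 := by exact_mod_cast h
    omega
  have h1 := edge_count F hF k hk
  have h6 : 6 * (k + 2).choose 3 = (k + 2) * ((k + 1) * k) := by
    have := Nat.descFactorial_eq_factorial_mul_choose (k + 2) 3
    simp [Nat.descFactorial, Nat.factorial] at this
    rw [← this]; ring
  rw [hcard, h6] at h1
  have hle : (vertsOf F).card ≤ k + 2 :=
    Nat.le_of_mul_le_mul_right h1 (by have : 0 < k := by omega
                                      positivity)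
  have hsub : F ⊆ (vertsOf F).powersetCard 3 := by
    intro T hT
    exact Finset.mem_powersetCard.2 ⟨fun x hx => mem_vertsOf.2 ⟨T, hT, hx⟩, hF.2 T hT⟩
  have hc := Finset.card_le_card hsub
  rw [Finset.card_powersetCard, hcard] at hc
  have heq : F = (vertsOf F).powersetCard 3 :=
    Finset.eq_of_subset_of_card_le hsub (by
      rw [Finset.card_powersetCard, hcard]; exact Nat.choose_le_choose 3 hle)
  refine ⟨?_, heq⟩
  by_contra hne
  have hlt : (vertsOf F).card ≤ k + 1 := by omega
  have := Nat.choose_le_choose 3 hlt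
  have h7 : (k + 2).choose 3 = (k + 1).choose 2 + (k + 1).choose 3 := Nat.choose_succ_succ _ _
  have h8 : 0 < (k + 1).choose 2 := Nat.choose_pos (by omega)
  omega

/-- The order sign of a pair. -/
noncomputable def osg (x y : ℕ) : ℝ := if x < y then 1 else if y < x then -1 else 0

lemma osg_swap (x y : ℕ) : osg y x = - osg x y := by
  unfold osg
  split_ifs <;> first | omega | norm_num

lemma osg_sq {x y : ℕ} (h : x ≠ y) : osg x y * osg x y = 1 := by
  unfold osg
  split_ifs <;> first | omega | norm_num

lemma osg_self (x : ℕ) : osg x x = 0 := by simp [osg]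

lemma triSign_eq {x y z : ℕ} (hxy : x ≠ y) (hyz : y ≠ z) (hzx : z ≠ x) :
    triSign {x, y, z} {x, y} = -(osg y z * osg z x) := by
  have h1 : ({x, y} : Finset ℕ) ⊆ {x, y, z} := by
    intro a; simp; tauto
  have h2 : ({x, y} : Finset ℕ).card = 2 := Finset.card_pair hxy
  have h3 : ({x, y, z} : Finset ℕ).card = 3 := Finset.card_eq_three.2 ⟨x, y, z, hxy, hzx.symm, hyz, rfl⟩
  have h4 : ({x, y, z} : Finset ℕ) \ {x, y} = {z} := by
    ext a; simp; constructor
    · rintro ⟨h | h | h, h'⟩ <;> tauto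
    · rintro rfl; tauto
  have hmax : (({z} : Finset ℕ).max = ({x, y, z} : Finset ℕ).max) ↔ (x < z ∧ y < z) := by
    rw [Finset.max_insert, Finset.max_insert, Finset.max_singleton]
    rw [← WithBot.coe_max, ← WithBot.coe_max, WithBot.coe_inj]
    omega
  have hmin : (({z} : Finset ℕ).min = ({x, y, z} : Finset ℕ).min) ↔ (z < x ∧ z < y) := by
    rw [Finset.min_insert, Finset.min_insert, Finset.min_singleton]
    rw [← WithTop.coe_min, ← WithTop.coe_min, WithTop.coe_inj]
    omega
  unfold triSign osg
  rw [if_pos ⟨h1, h2, h3⟩, h4]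
  simp only [hmax, hmin]
  split_ifs <;> first | omega | norm_num

lemma sub_three {x y z : ℕ} {f : Finset ℕ} (hf : f ⊆ {x, y, z}) (hc : f.card = 2)
    (hxy : x ≠ y) (hyz : y ≠ z) (hzx : z ≠ x) :
    f = {x, y} ∨ f = {y, z} ∨ f = {z, x} := by
  have h3 : ({x, y, z} : Finset ℕ).card = 3 := Finset.card_eq_three.2 ⟨x, y, z, hxy, hzx.symm, hyz, rfl⟩
  have h : (({x, y, z} : Finset ℕ) \ f).card = 1 := by
    rw [Finset.card_sdiff_of_subset hf, h3, hc]
  obtain ⟨t, ht⟩ := Finset.card_eq_one.1 h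
  have hft : f = ({x, y, z} : Finset ℕ) \ {t} := by
    rw [← ht, Finset.sdiff_sdiff_eq_self hf]
  have htm : t ∈ ({x, y, z} : Finset ℕ) := by
    have : t ∈ ({x, y, z} : Finset ℕ) \ f := by rw [ht]; simp
    exact (Finset.mem_sdiff.1 this).1
  simp only [Finset.mem_insert, Finset.mem_singleton] at htm
  rcases htm with rfl | rfl | rfl
  · right; left; rw [hft]; ext a; simp; constructor
    · rintro ⟨h | h | h, h'⟩ <;> tauto
    · rintro (rfl | rfl) <;> tauto
  · right; right; rw [hft]; ext a; simp; constructor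
    · rintro ⟨h | h | h, h'⟩ <;> tauto
    · rintro (rfl | rfl) <;> tauto
  · left; rw [hft]; ext a; simp; constructor
    · rintro ⟨h | h | h, h'⟩ <;> tauto
    · rintro (rfl | rfl) <;> tauto

lemma tri_inner_sum (E : Finset (Finset ℕ)) (w : Finset ℕ → ℝ) {x y z : ℕ}
    (hxy : x ≠ y) (hyz : y ≠ z) (hzx : z ≠ x)
    (h1 : {x, y} ∈ E) (h2 : {y, z} ∈ E) (h3 : {z, x} ∈ E) :
    triSign {x, y, z} {x, y} * ∑ f ∈ E, triSign {x, y, z} f * w f =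
      osg x y * (osg x y * w {x, y} + osg y z * w {y, z} + osg z x * w {z, x}) := by
  have hs : ∑ f ∈ E, triSign {x, y, z} f * w f =
      ∑ f ∈ ({{x, y}, {y, z}, {z, x}} : Finset (Finset ℕ)), triSign {x, y, z} f * w f := by
    symm
    apply Finset.sum_subset
    · intro f hf
      simp only [Finset.mem_insert, Finset.mem_singleton] at hf
      rcases hf with rfl | rfl | rfl <;> assumption
    · intro f _ hf
      have : triSign {x, y, z} f = 0 := by
        unfold triSign
        rw [if_neg]
        rintro ⟨ha, hb, -⟩
        apply hf
        simpa using sub_three ha hb hxy hyz hzx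
      rw [this, zero_mul]
  have n1 : ({x, y} : Finset ℕ) ≠ {y, z} := by
    intro h
    have : x ∈ ({y, z} : Finset ℕ) := by rw [← h]; simp
    simp at this; tauto
  have n2 : ({x, y} : Finset ℕ) ≠ {z, x} := by
    intro h
    have : y ∈ ({z, x} : Finset ℕ) := by rw [← h]; simp
    simp at this; tauto
  have n3 : ({y, z} : Finset ℕ) ≠ {z, x} := by
    intro h
    have : x ∈ ({y, z} : Finset ℕ) := by rw [h]; simp
    simp at this; tauto
  rw [hs, Finset.sum_insert (by simp [n1, n2]), Finset.sum_insert (by simp [n3]),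
    Finset.sum_singleton]
  have e1 : ({x, y, z} : Finset ℕ) = {y, z, x} := by ext a; simp; tauto
  have e2 : ({x, y, z} : Finset ℕ) = {z, x, y} := by ext a; simp; tauto
  have t1 := triSign_eq hxy hyz hzx
  have t2 := triSign_eq hyz hzx hxy
  have t3 := triSign_eq hzx hxy hyz
  rw [← e1] at t2
  rw [← e2] at t3
  rw [t1, t2, t3]
  have q1 := osg_sq hxy
  have q2 := osg_sq hyz
  have q3 := osg_sq hzx
  have q1' : osg x y * (osg x y * w {x, y}) = w {x, y} := by rw [← mul_assoc, q1, one_mul]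
  have p1 : -(osg y z * osg z x) * (-(osg y z * osg z x) * w {x, y}) = w {x, y} := by
    linear_combination (osg z x * osg z x * w {x, y}) * q2 + w {x, y} * q3
  have p2 : -(osg y z * osg z x) * (-(osg z x * osg x y) * w {y, z}) =
      osg x y * (osg y z * w {y, z}) := by
    linear_combination (osg y z * osg x y * w {y, z}) * q3
  have p3 : -(osg y z * osg z x) * (-(osg x y * osg y z) * w {z, x}) =
      osg x y * (osg z x * w {z, x}) := by
    linear_combination (osg z x * osg x y * w {z, x}) * q2
  linear_combination p1 + p2 + p3 - q1'

lemma pair_edge (F : Finset (Finset ℕ)) (n : ℕ) (hn : 3 ≤ n) (hV : (vertsOf F).card = n)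
    (hF : F = (vertsOf F).powersetCard 3) :
    ∀ x ∈ vertsOf F, ∀ y ∈ vertsOf F, x ≠ y → ({x, y} : Finset ℕ) ∈ edgesOf F := by
  intro x hx y hy hxy
  have hc : ({x, y} : Finset ℕ).card = 2 := Finset.card_pair hxy
  obtain ⟨T, h1, h2, h3⟩ := Finset.exists_subsuperset_card_eq (s := {x, y}) (t := vertsOf F) (n := 3)
    (by simp [Finset.insert_subset_iff, hx, hy]) (by omega) (by omega)
  refine mem_edgesOf.2 ⟨T, ?_, h1, hc⟩
  rw [hF]
  exact Finset.mem_powersetCard.2 ⟨h2, h3⟩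

lemma outer_sum (V : Finset ℕ) (x y : ℕ) (hx : x ∈ V) (hy : y ∈ V) (hxy : x ≠ y)
    (G : Finset ℕ → ℝ) :
    ∑ T ∈ V.powersetCard 3, triSign T {x, y} * G T =
      ∑ z ∈ (V.erase x).erase y, triSign {x, y, z} {x, y} * G {x, y, z} := by
  have himg : ∑ T ∈ V.powersetCard 3, triSign T {x, y} * G T =
      ∑ T ∈ ((V.erase x).erase y).image (fun z => ({x, y, z} : Finset ℕ)),
        triSign T {x, y} * G T := by
    symm
    apply Finset.sum_subset
    · intro T hT
      obtain ⟨z, hz, rfl⟩ := Finset.mem_image.1 hT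
      simp only [Finset.mem_erase] at hz
      refine Finset.mem_powersetCard.2 ⟨?_, Finset.card_eq_three.2
        ⟨x, y, z, hxy, hz.2.1.symm, hz.1.symm, rfl⟩⟩
      simp [Finset.insert_subset_iff, hx, hy, hz.2.2]
    · intro T hT hT'
      have : triSign T {x, y} = 0 := by
        unfold triSign
        rw [if_neg]
        rintro ⟨ha, hb, hc⟩
        apply hT'
        have h1 : (T \ {x, y}).card = 1 := by
          rw [Finset.card_sdiff_of_subset ha, hc, hb]
        obtain ⟨z, hz⟩ := Finset.card_eq_one.1 h1
        have hzm : z ∈ T \ {x, y} := by rw [hz]; simp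
        have hzm' := Finset.mem_sdiff.1 hzm
        refine Finset.mem_image.2 ⟨z, ?_, ?_⟩
        · have := (Finset.mem_powersetCard.1 hT).1 hzm'.1
          have h2 := hzm'.2
          simp only [Finset.mem_insert, Finset.mem_singleton, not_or] at h2
          simp [this, h2]
        · rw [← Finset.union_sdiff_of_subset ha, hz]
          ext a; simp
      rw [this, zero_mul]
  rw [himg, Finset.sum_image]
  intro a ha b hb hab
  simp only [Finset.coe_erase, Set.mem_sdiff, Set.mem_singleton_iff] at ha hb
  have : a ∈ ({x, y, b} : Finset ℕ) := by
    have hab' : ({x, y, a} : Finset ℕ) = {x, y, b} := hab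
    rw [← hab']; simp
  simp only [Finset.mem_insert, Finset.mem_singleton] at this
  tauto

lemma eig_complete (F : Finset (Finset ℕ)) (n : ℕ) (hn : 3 ≤ n) (hV : (vertsOf F).card = n)
    (hF : F = (vertsOf F).powersetCard 3) (μ : ℝ) (hμ : 0 < μ)
    (v : {e // e ∈ edgesOf F} → ℝ) (hv : v ≠ 0)
    (hev : ((delta1 F)ᵀ * delta1 F).mulVec v = μ • v) : μ = n := by
  have hpe := pair_edge F n hn hV hF
  set V := vertsOf F with hVdef
  set w : Finset ℕ → ℝ := fun e => if h : e ∈ edgesOf F then v ⟨e, h⟩ else 0 with hw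
  have hwv : ∀ e : {e // e ∈ edgesOf F}, w e.1 = v e := fun e => by simp [hw]
  have heq : ∀ e ∈ edgesOf F,
      ∑ T ∈ F, triSign T e * ∑ f ∈ edgesOf F, triSign T f * w f = μ * w e := by
    intro e he
    have h := congrFun hev ⟨e, he⟩
    simp only [Pi.smul_apply, smul_eq_mul] at h
    rw [← hwv ⟨e, he⟩] at h
    simp only at h
    rw [← h]
    simp only [Matrix.mulVec, dotProduct, gram_apply, ← hwv]
    rw [Finset.sum_coe_sort (edgesOf F) (fun f => (∑ T ∈ F, triSign T e * triSign T f) * w f)]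
    simp only [Finset.sum_mul, Finset.mul_sum]
    rw [Finset.sum_comm]
    simp only [mul_assoc]
  set α : ℕ → ℕ → ℝ := fun x y => osg x y * w {x, y} with hα
  have hanti : ∀ x y, α y x = - α x y := by
    intro x y
    simp only [hα]
    rw [osg_swap x y, Finset.pair_comm y x]; ring
  have hself : ∀ x, α x x = 0 := fun x => by simp [hα, osg_self]
  have hA : ∀ x ∈ V, ∀ y ∈ V, ∑ z ∈ V, (α x y + α y z + α z x) = μ * α x y := by
    intro x hx y hy
    by_cases hxy : x = y
    · subst hxy
      rw [hself]
      simp only [mul_zero]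
      exact Finset.sum_eq_zero fun z _ => by rw [hanti x z]; ring
    have h := heq _ (hpe x hx y hy hxy)
    have h' : ∑ T ∈ V.powersetCard 3, triSign T {x, y} *
        ∑ f ∈ edgesOf F, triSign T f * w f = μ * w {x, y} := by
      rw [← h]
      exact Finset.sum_congr hF.symm fun _ _ => rfl
    rw [outer_sum V x y hx hy hxy] at h'
    have h2 : ∑ z ∈ (V.erase x).erase y, triSign {x, y, z} {x, y} *
        ∑ f ∈ edgesOf F, triSign {x, y, z} f * w f =
        ∑ z ∈ (V.erase x).erase y, osg x y * (α x y + α y z + α z x) := by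
      refine Finset.sum_congr rfl fun z hz => ?_
      simp only [Finset.mem_erase] at hz
      exact tri_inner_sum _ w hxy hz.1.symm hz.2.1 (hpe x hx y hy hxy) (hpe y hy z hz.2.2 hz.1.symm)
        (hpe z hz.2.2 x hx hz.2.1)
    rw [h2, ← Finset.mul_sum] at h'
    have h3 : ∑ z ∈ V, (α x y + α y z + α z x) =
        ∑ z ∈ (V.erase x).erase y, (α x y + α y z + α z x) := by
      rw [← Finset.add_sum_erase V _ hx, ← Finset.add_sum_erase (V.erase x) _
        (Finset.mem_erase.2 ⟨Ne.symm hxy, hy⟩), hself, hself, hanti x y]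
      ring
    rw [h3]
    have q := osg_sq hxy
    have : α x y = osg x y * w {x, y} := rfl
    rw [this]
    linear_combination osg x y * h' - (∑ z ∈ (V.erase x).erase y, (α x y + α y z + α z x)) * q
  have hdbl : ∑ y ∈ V, ∑ z ∈ V, α y z = 0 := by
    have h1 : ∑ y ∈ V, ∑ z ∈ V, α y z = ∑ y ∈ V, ∑ z ∈ V, α z y := Finset.sum_comm
    have h2 : ∑ y ∈ V, ∑ z ∈ V, α z y = - ∑ y ∈ V, ∑ z ∈ V, α y z := by
      simp only [← Finset.sum_neg_distrib]
      exact Finset.sum_congr rfl fun y _ => Finset.sum_congr rfl fun z _ => hanti y z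
    linarith
  have hneg : ∀ x, ∑ z ∈ V, α z x = - ∑ z ∈ V, α x z := by
    intro x
    rw [← Finset.sum_neg_distrib]
    exact Finset.sum_congr rfl fun z _ => hanti x z
  have hB : ∀ x ∈ V, ∑ y ∈ V, α x y = 0 := by
    intro x hx
    have h1 : ∑ y ∈ V, ∑ z ∈ V, (α x y + α y z + α z x) = μ * ∑ y ∈ V, α x y := by
      rw [Finset.mul_sum]
      exact Finset.sum_congr rfl fun y hy => hA x hx y hy
    simp only [Finset.sum_add_distrib, Finset.sum_const, nsmul_eq_mul] at h1
    rw [hdbl, hneg x, ← Finset.mul_sum] at h1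
    have : μ * ∑ y ∈ V, α x y = 0 := by rw [← h1]; ring
    exact (mul_eq_zero.1 this).resolve_left hμ.ne'
  obtain ⟨e, he⟩ : ∃ e, v e ≠ 0 := Function.ne_iff.1 hv
  obtain ⟨T, hT, heT, hc⟩ := mem_edgesOf.1 e.2
  obtain ⟨x, y, hxy, hexy⟩ := Finset.card_eq_two.1 hc
  have hx : x ∈ V := mem_vertsOf.2 ⟨T, hT, heT (by rw [hexy]; simp)⟩
  have hy : y ∈ V := mem_vertsOf.2 ⟨T, hT, heT (by rw [hexy]; simp)⟩
  have h := hA x hx y hy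
  simp only [Finset.sum_add_distrib, Finset.sum_const, nsmul_eq_mul] at h
  rw [hneg x, hB x hx, hB y hy, hV] at h
  have hne : α x y ≠ 0 := by
    have h1 : α x y = osg x y * v e := by
      rw [← hwv e, hexy]
    rw [h1]
    refine mul_ne_zero ?_ he
    intro h0
    have := osg_sq hxy
    rw [h0] at this
    norm_num at this
  have : (μ - n) * α x y = 0 := by linarith
  have := (mul_eq_zero.1 this).resolve_right hne
  linarith

/-- Rigidity at the clique threshold: if `n ≥ 3`, `|𝒯| = C(n,3)` and `λ(𝒯) > n - 1`,
then `λ(𝒯) = n`, the support graph is a complete graph on exactly `n` vertices, and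
`𝒯` consists of all 3-element subsets of the vertex set of `Γ₀(𝒯)`. -/
theorem stmt6 (n : ℕ) (hn : 3 ≤ n) (F : Finset (Finset ℕ)) (hF : IsTriFam F)
    (hcard : F.card = n.choose 3) (hlam : (n : ℝ) - 1 < lam F) :
    lam F = (n : ℝ) ∧ (vertsOf F).card = n ∧ F = (vertsOf F).powersetCard 3 ∧
    (∀ x ∈ vertsOf F, ∀ y ∈ vertsOf F, x ≠ y → ({x, y} : Finset ℕ) ∈ edgesOf F) := by
  obtain ⟨hV, hP⟩ := rigid n hn F hF hcard hlam
  refine ⟨?_, hV, hP, pair_edge F n hn hV hP⟩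
  have hn' : (3 : ℝ) ≤ n := by exact_mod_cast hn
  have hlam' := hlam
  unfold lam lambdaMinPos at hlam' ⊢
  have hne : {μ : ℝ | 0 < μ ∧ ∃ v : {e // e ∈ edgesOf F} → ℝ, v ≠ 0 ∧
      ((delta1 F)ᵀ * delta1 F).mulVec v = μ • v}.Nonempty := by
    by_contra h
    rw [Set.not_nonempty_iff_eq_empty] at h
    rw [h, Real.sInf_empty] at hlam'
    linarith
  have hall : ∀ μ ∈ {μ : ℝ | 0 < μ ∧ ∃ v : {e // e ∈ edgesOf F} → ℝ, v ≠ 0 ∧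
      ((delta1 F)ᵀ * delta1 F).mulVec v = μ • v}, μ = n := by
    rintro μ ⟨hμ, v, hv, hev⟩
    exact eig_complete F n hn hV hP μ hμ v hv hev
  rw [Set.eq_singleton_iff_nonempty_unique_mem.2 ⟨hne, hall⟩, csInf_singleton]
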